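/- Let L ≥ 2 be an integer and let η(L) ∈ Ξ_∞ be the binary sequence obtained from the hierarchical weighted word by fattening each entry, i.e. f(η(L)) = ζ̃(L). If p < 1/(576(L+1)²), then ℙ_p{ξ ∈ Ξ : (η(L), ξ) is compatible} > 0. -/

import Mathlib

open Filter Set MeasureTheory
open scoped ENNReal NNReal

namespace Paper

/-! ### Binary sequences and compatibility -/

/-- Delete the `i`-th entry of a sequence, shifting everything to the right of it
one step to the left. -/
def deleteAt {α : Type*} (ξ : ℕ → α) (i : ℕ) : ℕ → α :=
  fun j => if j < i then ξ j else ξ (j + 1)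

/-- The annihilation operator `Δ_i^0` on binary sequences: delete the `i`-th digit
if it is a zero (`false`), otherwise do nothing. -/
def delta0 (ξ : ℕ → Bool) (i : ℕ) : ℕ → Bool :=
  if ξ i = false then deleteAt ξ i else ξ

/-- The annihilation operator `Δ_i^1` on binary sequences: delete the `i`-th digit
if it is a one (`true`), otherwise do nothing. -/
def delta1 (ξ : ℕ → Bool) (i : ℕ) : ℕ → Bool :=
  if ξ i = true then deleteAt ξ i else ξ

/-- `Reach1 η η'` : `η'` is obtained from `η` by finitely many applications of
operators `Δ_·^1`. -/
def Reach1 : (ℕ → Bool) → (ℕ → Bool) → Prop :=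
  Relation.ReflTransGen fun a b => ∃ i, b = delta1 a i

/-- `Reach0 ξ ξ'` : `ξ'` is obtained from `ξ` by finitely many applications of
operators `Δ_·^0`. -/
def Reach0 : (ℕ → Bool) → (ℕ → Bool) → Prop :=
  Relation.ReflTransGen fun a b => ∃ i, b = delta0 a i

/-- Compatibility of an ordered pair of binary sequences: one can delete ones from `η`
and zeroes from `ξ` so that the resulting sequences converge (in the product topology)
to a common limit. -/
def Compatible (η ξ : ℕ → Bool) : Prop :=
  ∃ (ηs ξs : ℕ → ℕ → Bool) (l : ℕ → Bool),
    (∀ k, Reach1 η (ηs k)) ∧ (∀ k, Reach0 ξ (ξs k)) ∧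
      Tendsto ηs atTop (nhds l) ∧ Tendsto ξs atTop (nhds l)

/-- `μ` is the product Bernoulli measure on `{0,1}^ℕ` with parameter `p`. -/
def IsBernoulliProduct (μ : Measure (ℕ → Bool)) (p : ℝ) : Prop :=
  IsProbabilityMeasure μ ∧
    ∀ (s : Finset ℕ) (b : ℕ → Bool),
      μ {ξ | ∀ i ∈ s, ξ i = b i} = ∏ i ∈ s, ENNReal.ofReal (if b i then p else 1 - p)

/-- The set `Ξ_∞` of binary sequences with infinitely many ones and infinitely many
zeroes. -/
def Xinf (ξ : ℕ → Bool) : Prop :=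
  (∀ n, ∃ m, n ≤ m ∧ ξ m = true) ∧ ∀ n, ∃ m, n ≤ m ∧ ξ m = false

/-- Length of the run of ones of `ξ` starting at position `n` (junk value `0` if the
run is infinite). -/
noncomputable def runLen (ξ : ℕ → Bool) (n : ℕ) : ℕ :=
  letI := Classical.dec (∃ k, ξ (n + k) = false)
  if h : ∃ k, ξ (n + k) = false then Nat.find h else 0

/-- The position in `ξ` at which the `j`-th letter of the weighted word `f ξ` starts. -/
noncomputable def fpos (ξ : ℕ → Bool) : ℕ → ℕ
  | 0 => 0
  | j + 1 => fpos ξ j + max (runLen ξ (fpos ξ j)) 1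

/-- The run-length map `f : Ξ_∞ → Ψ`, replacing each maximal run of ones by a single
letter whose weight is the length of the run (zeroes being kept as letters of
weight `0`). -/
noncomputable def fmap (ξ : ℕ → Bool) : ℕ → ℕ :=
  fun j => runLen ξ (fpos ξ j)

/-! ### Weighted words -/

/-- The set `Ψ` of weighted words: a weight `≥ 1` is always followed by a weight `0`. -/
def Psi (ψ : ℕ → ℕ) : Prop := ∀ i, 1 ≤ ψ i → ψ (i + 1) = 0

/-- The annihilation operator `Δ_i^0` on weighted words. -/
def pdelta0 (ψ : ℕ → ℕ) (i : ℕ) : ℕ → ℕ :=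
  if ψ i ≠ 0 then ψ
  else if i = 0 ∨ ψ (i - 1) = 0 ∨ ψ (i + 1) = 0 then deleteAt ψ i
  else fun j => if j + 1 < i then ψ j else if j + 1 = i then ψ (i - 1) + ψ (i + 1) else ψ (j + 2)

/-- The annihilation operator `Δ_i^1` on weighted words. -/
def pdelta1 (ψ : ℕ → ℕ) (i : ℕ) : ℕ → ℕ :=
  if ψ i = 0 then ψ
  else if ψ i = 1 then deleteAt ψ i
  else Function.update ψ i (ψ i - 1)

/-- Finitely many applications of operators `Δ_·^1` on weighted words. -/
def PReach1 : (ℕ → ℕ) → (ℕ → ℕ) → Prop :=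
  Relation.ReflTransGen fun a b => ∃ i, b = pdelta1 a i

/-- Finitely many applications of operators `Δ_·^0` on weighted words. -/
def PReach0 : (ℕ → ℕ) → (ℕ → ℕ) → Prop :=
  Relation.ReflTransGen fun a b => ∃ i, b = pdelta0 a i

/-- Compatibility of an ordered pair of weighted words. -/
def CompatibleP (ζ ψ : ℕ → ℕ) : Prop :=
  ∃ (ζs ψs : ℕ → ℕ → ℕ) (l : ℕ → ℕ),
    (∀ k, PReach1 ζ (ζs k)) ∧ (∀ k, PReach0 ψ (ψs k)) ∧
      (∀ k, Psi (ζs k)) ∧ (∀ k, Psi (ψs k)) ∧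
      Tendsto ζs atTop (nhds l) ∧ Tendsto ψs atTop (nhds l)

/-! ### The oriented percolation process -/

/-- Oriented edges of the graph `G`: from `u` to `u + (0,1)` and from `u` to `u + (1,1)`. -/
def IsStep (u v : ℕ × ℕ) : Prop :=
  (v.1 = u.1 ∧ v.2 = u.2 + 1) ∨ (v.1 = u.1 + 1 ∧ v.2 = u.2 + 1)

/-- Open vertices of the configuration `ω_{ζ,ψ}`.  (Sequences are `0`-indexed in this
formalization, so the entry of `ζ` at the paper's position `v₁ ≥ 1` is `ζ (v₁ - 1)`.) -/
def OpenV (ζ ψ : ℕ → ℕ) (v : ℕ × ℕ) : Prop :=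
  v = (0, 0) ∨ (1 ≤ v.1 ∧ 1 ≤ v.2 ∧ ψ (v.2 - 1) ≤ ζ (v.1 - 1))

/-- Heavy vertices: `v₂ = 0`, or the row weight `ψ_{v₂}` is positive. -/
def Heavy (ψ : ℕ → ℕ) (v : ℕ × ℕ) : Prop := v.2 = 0 ∨ 1 ≤ ψ (v.2 - 1)

/-- `π 0, π 1, …, π n` is an open oriented path in `ω_{ζ,ψ}`. -/
def IsOpenPath (ζ ψ : ℕ → ℕ) (π : ℕ → ℕ × ℕ) (n : ℕ) : Prop :=
  (∀ i < n, IsStep (π i) (π (i + 1))) ∧ ∀ i ≤ n, OpenV ζ ψ (π i)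

/-- The path `π 0, …, π n` is permitted: any two distinct heavy vertices on it have
different first coordinates. -/
def IsPermitted (ψ : ℕ → ℕ) (π : ℕ → ℕ × ℕ) (n : ℕ) : Prop :=
  ∀ i ≤ n, ∀ j ≤ n, π i ≠ π j → Heavy ψ (π i) → Heavy ψ (π j) → (π i).1 ≠ (π j).1

/-- There is an infinite open permitted oriented path starting from the origin in the
percolation configuration `ω_{ζ,ψ}`. -/
def InfOpenPermitted (ζ ψ : ℕ → ℕ) : Prop :=
  ∃ π : ℕ → ℕ × ℕ, π 0 = (0, 0) ∧ (∀ n, IsStep (π n) (π (n + 1))) ∧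
    (∀ n, OpenV ζ ψ (π n)) ∧
    ∀ i j, π i ≠ π j → Heavy ψ (π i) → Heavy ψ (π j) → (π i).1 ≠ (π j).1

/-- `V_{⟨ζ,ψ⟩}(c)`: vertices in row `c` reachable from the origin by an open permitted
oriented path. -/
def Vset (ζ ψ : ℕ → ℕ) (c : ℕ) : Set (ℕ × ℕ) :=
  {v | v.2 = c ∧ ∃ (π : ℕ → ℕ × ℕ) (n : ℕ), π 0 = (0, 0) ∧ π n = v ∧
    IsOpenPath ζ ψ π n ∧ IsPermitted ψ π n}

/-- The open oriented cluster of the origin in `ω_{ζ,ψ}`. -/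
def ClusterO (ζ ψ : ℕ → ℕ) : Set (ℕ × ℕ) :=
  {v | ∃ (π : ℕ → ℕ × ℕ) (n : ℕ), π 0 = (0, 0) ∧ π n = v ∧ IsOpenPath ζ ψ π n}

/-- The horizontal slab `S_{[a,b]}`. -/
def Slab (a b : ℕ) : Set (ℕ × ℕ) := {v | a ≤ v.2 ∧ v.2 ≤ b}

/-- The horizontal discrete segment in row `c` with endpoints `a` and `b`. -/
def HSeg (c a b : ℕ) : Set (ℕ × ℕ) := {v | v.2 = c ∧ a ≤ v.1 ∧ v.1 ≤ b}

/-- The shift `θ_m`. -/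
def shiftSeq (m : ℕ) (ψ : ℕ → ℕ) : ℕ → ℕ := fun j => ψ (j + m)

/-- The hierarchical weighted word `ζ(L)`: the letter at the paper's position
`j ≥ 1` (Lean index `j - 1`) has weight `k` iff `L^k ∣ j` and `L^{k+1} ∤ j`. -/
noncomputable def zetaL (L : ℕ) : ℕ → ℕ := fun j => sSup {k | L ^ k ∣ j + 1}

/-- Lean indices at which `ψ` has an entry `≥ k`. -/
def idxSet (ψ : ℕ → ℕ) (k : ℕ) : Set ℕ := {n | k ≤ ψ n}

/-- `i_k(ψ)`: the first (1-based, as in the paper) position at which `ψ` has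
an entry `≥ k` (meaningful when `idxSet ψ k` is nonempty). -/
noncomputable def idx (ψ : ℕ → ℕ) (k : ℕ) : ℕ := sInf (idxSet ψ k) + 1

/-- Condition a) of being `M`-spaced. -/
def CondA (M : ℕ) (ψ : ℕ → ℕ) : Prop := ∀ i j : ℕ, i < j → M ^ min (ψ i) (ψ j) ≤ j - i

/-- `ψ ∈ Ψ_M^k` : `ψ` is `M`-spaced up to level `k`. -/
def SpacedUpTo (M k : ℕ) (ψ : ℕ → ℕ) : Prop :=
  Psi ψ ∧ CondA M ψ ∧ ∀ j, 1 ≤ j → j ≤ k → (idxSet ψ j).Nonempty → M ^ j ≤ idx ψ j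

/-- `ψ ∈ Ψ_M` : `ψ` is `M`-spaced. -/
def Spaced (M : ℕ) (ψ : ℕ → ℕ) : Prop :=
  Psi ψ ∧ CondA M ψ ∧ ∀ j, 1 ≤ j → (idxSet ψ j).Nonempty → M ^ j ≤ idx ψ j

/-! ### Discrete Hausdorff dimension (Barlow–Taylor) -/

/-- `ν_α(A, F)` with the normalizing diameter `dF` of `F` given explicitly; the
infimum is over countable covers of `A ∩ F` by integer intervals `[x, y)`. -/
noncomputable def nuBT (α : ℝ) (A F : Set ℤ) (dF : ℝ) : ℝ≥0∞ :=
  (⨅ (B : ℕ → ℤ × ℤ) (_ : A ∩ F ⊆ ⋃ i, Set.Ico (B i).1 (B i).2),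
      ∑' i, ENNReal.ofReal ((((B i).2 - (B i).1 : ℤ)) : ℝ) ^ α) /
    ENNReal.ofReal dF ^ α

/-- The annulus `I_n^{(r)}` (for `n ≥ 1`). -/
noncomputable def ringBT (r n : ℕ) : Set ℤ :=
  if n = 1 then Set.Ico (-(r : ℤ)) (r : ℤ)
  else Set.Ico (-((r : ℤ) ^ n)) ((r : ℤ) ^ n) \ Set.Ico (-((r : ℤ) ^ (n - 1))) ((r : ℤ) ^ (n - 1))

/-- `m_α^{(r)}(A) = ∑_{n ≥ 1} ν_α(A, I_n^{(r)})`. -/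
noncomputable def mBT (r : ℕ) (α : ℝ) (A : Set ℤ) : ℝ≥0∞ :=
  ∑' n : ℕ, nuBT α A (ringBT r (n + 1)) (2 * (r : ℝ) ^ (n + 1))

/-- The discrete (Barlow–Taylor) Hausdorff dimension of `A ⊆ ℤ`. -/
noncomputable def dimBT (r : ℕ) (A : Set ℤ) : ℝ :=
  sInf {α : ℝ | 0 < α ∧ mBT r α A < ⊤}

/-- The set of zeroes of a binary sequence, viewed inside `ℤ` (at the paper's
positions `1, 2, …`). -/
def zeroSetZ (η : ℕ → Bool) : Set ℤ := {i : ℤ | ∃ n : ℕ, i = (n : ℤ) + 1 ∧ η n = false}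

/-! ### The grouping construction -/

/-- A cluster together with its mass. -/
abbrev Clu : Type := Set ℕ × ℕ

/-- The set of (paper, i.e. 1-based) positions of the ones of `ξ`. -/
def Gamma (ξ : ℕ → Bool) : Set ℕ := {n | 1 ≤ n ∧ ξ (n - 1) = true}

/-- The span of a set: the smallest interval containing it. -/
noncomputable def spanI (C : Set ℕ) : Set ℕ := Set.Icc (sInf C) (sSup C)

/-- Euclidean distance between two sets of integers. -/
noncomputable def cluDist (C D : Set ℕ) : ℕ := sInf {d | ∃ a ∈ C, ∃ b ∈ D, d = Nat.dist a b}

/-- Diameter of a set of integers. -/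
noncomputable def sdiam (C : Set ℕ) : ℕ := sSup {d | ∃ a ∈ C, ∃ b ∈ C, d = Nat.dist a b}

/-- `C` lies entirely to the left of `D`. -/
def cluLT (C D : Set ℕ) : Prop := ∀ a ∈ C, ∀ b ∈ D, a < b

/-- `p` and `q` are adjacent clusters of the collection `B` (no cluster of `B` lies
strictly between them) at distance `< t`. -/
def adjStep (B : Set Clu) (t : ℕ) (p q : Clu) : Prop :=
  p ∈ B ∧ q ∈ B ∧ cluDist p.1 q.1 < t ∧
    ((cluLT p.1 q.1 ∧ ∀ r ∈ B, ¬(cluLT p.1 r.1 ∧ cluLT r.1 q.1)) ∨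
      (cluLT q.1 p.1 ∧ ∀ r ∈ B, ¬(cluLT q.1 r.1 ∧ cluLT r.1 p.1)))

/-- The maximal run (within the collection `B`, with gap threshold `t`) containing `p`. -/
def runOf (B : Set Clu) (t : ℕ) (p : Clu) : Set Clu :=
  {q ∈ B | Relation.ReflTransGen (adjStep B t) p q}

/-- `R` is a maximal run of length `≥ 2` of clusters of `B` with gap threshold `t`. -/
def IsRun (B : Set Clu) (t : ℕ) (R : Set Clu) : Prop :=
  ∃ p ∈ B, R = runOf B t p ∧ ∃ q ∈ R, q ≠ p

/-- The level-`(k+1)` cluster created from a maximal `(k+1)`-run `R`: its point set is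
`span(R) ∩ Γ`, and its mass is `∑ m(constituents) - k (n - 1)`. -/
noncomputable def runClu (Γ : Set ℕ) (k : ℕ) (R : Set Clu) : Clu :=
  (spanI (⋃ q ∈ R, q.1) ∩ Γ, (∑ᶠ q ∈ R, q.2) - k * (Nat.card R - 1))

/-- One step of the grouping construction: from the partition `𝐂_k` to `𝐂_{k+1}`. -/
noncomputable def nextPart (Γ : Set ℕ) (M k : ℕ) (S : Set Clu) : Set Clu :=
  {c | ∃ R, IsRun {q ∈ S | k + 1 ≤ q.2} (M ^ (k + 1)) R ∧ c = runClu Γ k R} ∪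
    {c ∈ S | ∀ R, IsRun {q ∈ S | k + 1 ≤ q.2} (M ^ (k + 1)) R →
      Disjoint c.1 (spanI (⋃ q ∈ R, q.1))}

/-- The partition `𝐂_k` of `Γ` into clusters with masses (grouping construction with
spacing parameter `M`). -/
noncomputable def parts (Γ : Set ℕ) (M : ℕ) : ℕ → Set Clu
  | 0 => {c | ∃ x ∈ Γ, c = ({x}, 1)}
  | k + 1 => nextPart Γ M k (parts Γ M k)

/-- `c` is a cluster of level `ℓ`: it appears in `𝐂_ℓ` and in no earlier partition. -/
def IsLevelCluster (Γ : Set ℕ) (M ℓ : ℕ) (c : Clu) : Prop :=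
  c ∈ parts Γ M ℓ ∧ ∀ k < ℓ, c ∉ parts Γ M k

/-- `κ(x) < ∞` : the levels of the clusters containing `x` are bounded. -/
def KappaFinite (Γ : Set ℕ) (M : ℕ) (x : ℕ) : Prop :=
  BddAbove {ℓ | ∃ c : Clu, IsLevelCluster Γ M ℓ c ∧ x ∈ c.1}

/-- The event `Ξ(p)` on which the grouping construction is well set:
`κ(x) < ∞` for every `x ∈ Γ(ξ)`. -/
def GoodSeq (M : ℕ) (ξ : ℕ → Bool) : Prop := ∀ x ∈ Gamma ξ, KappaFinite (Gamma ξ) M x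

/-- The collection `𝐂_∞` of maximal clusters: those that stay in `𝐂_k` forever. -/
def maxClusters (Γ : Set ℕ) (M : ℕ) : Set Clu :=
  {c | ∃ ℓ, ∀ k, ℓ ≤ k → c ∈ parts Γ M k}

/-- The defining condition of `χ(ξ) ≤ k` : every maximal cluster of mass `> k`
is at distance `≥ M^{mass}` from the origin.  (Positions are 1-based, so the distance
from a cluster to `0` is its smallest element.) -/
def ChiCond (Γ : Set ℕ) (M k : ℕ) : Prop :=
  ∀ c ∈ maxClusters Γ M, k < c.2 → M ^ c.2 ≤ sInf c.1

/-- The maximal cluster containing a given point (junk if there is none). -/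
noncomputable def maxCluOf (Γ : Set ℕ) (M : ℕ) (x : ℕ) : Clu :=
  letI := Classical.dec (∃ c : Clu, c ∈ maxClusters Γ M ∧ x ∈ c.1)
  if h : ∃ c : Clu, c ∈ maxClusters Γ M ∧ x ∈ c.1 then h.choose else (∅, 0)

/-- Enumeration of the maximal clusters in increasing order, together with the union
of those already enumerated. -/
noncomputable def enumAux (Γ : Set ℕ) (M : ℕ) : ℕ → Clu × Set ℕ
  | 0 => (maxCluOf Γ M (sInf Γ), (maxCluOf Γ M (sInf Γ)).1)
  | j + 1 =>
    (maxCluOf Γ M (sInf (Γ \ (enumAux Γ M j).2)),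
      (enumAux Γ M j).2 ∪ (maxCluOf Γ M (sInf (Γ \ (enumAux Γ M j).2))).1)

/-- The `j`-th maximal cluster `C_{∞,j}` (`j` is 0-based here). -/
noncomputable def enumClu (Γ : Set ℕ) (M : ℕ) (j : ℕ) : Clu := (enumAux Γ M j).1

/-- The start-point `x̂_j` of the `j`-th maximal cluster (`j` is 0-based here). -/
noncomputable def hatx (Γ : Set ℕ) (M : ℕ) : ℕ → ℕ
  | 0 => sInf Γ
  | j + 1 => sInf (Γ \ (enumAux Γ M j).2)

/-- The (1-based) position `x̂_j - ∑_{t<j} diam(C_{∞,t})` at which the entry of the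
`j`-th maximal cluster sits in the weighted word `ψ^ξ`. -/
noncomputable def cluPos (Γ : Set ℕ) (M : ℕ) (j : ℕ) : ℕ :=
  hatx Γ M j - ∑ t ∈ Finset.range j, sdiam (enumClu Γ M t).1

/-- The weighted word `ψ^ξ` associated to `ξ` by the grouping construction. -/
noncomputable def psiXi (M : ℕ) (ξ : ℕ → Bool) : ℕ → ℕ := fun i =>
  letI := Classical.dec (∃ j : ℕ, i + 1 = cluPos (Gamma ξ) M j)
  if h : ∃ j : ℕ, i + 1 = cluPos (Gamma ξ) M j then (enumClu (Gamma ξ) M h.choose).2 else 0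

/-- `ψ ⪯_M ζ`. -/
def PrecM (M : ℕ) (ψ ζ : ℕ → ℕ) : Prop :=
  ∀ j, (ψ j = 0 ↔ ζ j = 0) ∧ (1 ≤ ψ j → ψ j ≤ ζ j ∧ ζ j ≤ 3 * M ^ (ψ j - 1))

/-- The set `∪_i (span(C_{∞,i}) \ C_{∞,i})` of points to be deleted. -/
def Dset (Γ : Set ℕ) (M : ℕ) : Set ℕ := ⋃ c ∈ maxClusters Γ M, spanI c.1 \ c.1

/-- `j_n(ξ)` : the `n`-th (0-based) element of `Dset`, shifted by `n` to account for
the previous deletions (this is the paper's `j_{n+1}`, a 1-based position). -/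
noncomputable def jseq (Γ : Set ℕ) (M : ℕ) (n : ℕ) : ℕ := Nat.nth (· ∈ Dset Γ M) n - n

/-- The iterates `ξ^{(n)}` obtained by successively deleting the zeroes of `ξ`
lying inside spans of maximal clusters. -/
noncomputable def xiIter (M : ℕ) (ξ : ℕ → Bool) : ℕ → ℕ → Bool
  | 0 => ξ
  | n + 1 => delta0 (xiIter M ξ n) (jseq (Gamma ξ) M n - 1)

/-- The fattened hierarchical weighted word `ζ̃(L)` (with `M = 3(L+1)`). -/
noncomputable def tzeta (L : ℕ) : ℕ → ℕ := fun j =>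
  if zetaL L j = 0 then 0 else 3 * (3 * (L + 1)) ^ (zetaL L j - 1)

/-- `|A ∩ [0, n)|` for `A ⊆ ℕ`. -/
noncomputable def massCount (A : Set ℕ) (n : ℕ) : ℕ := Nat.card {a : ℕ | a ∈ A ∧ a < n}


/-! ### Numerical sequences (with `L = n + 2`, `K = n + 3`, `M = 3 K`) -/

/-- the scale `M` -/
def sM (n : ℕ) : ℕ := 3 * (n + 3)
/-- outer separation radius at level `k` -/
def sb (n k : ℕ) : ℕ := 2 * (n + 3) * sM n ^ k
/-- cluster diameter at level `k` -/
def sa (n : ℕ) : ℕ → ℕ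
  | 0 => 0
  | k + 1 => sa n k + 2 * sb n k
/-- jump length allowance -/
def sA (n : ℕ) : ℕ → ℕ
  | 0 => 2
  | k + 1 => sA n k + sa n (k + 1)
/-- period of runs of capacity `3 M ^ k` -/
def sP (n k : ℕ) : ℕ := (n + 1) * (n + 2) ^ k
/-- offset -/
def so (n : ℕ) : ℕ → ℕ
  | 0 => 0
  | k + 1 => 2 * so n k + 2 ^ k * sP n k + sA n k

lemma sa_bound (n k : ℕ) : 2 * (sa n k + 1) ≤ 3 * sM n ^ k := by
  induction k with
  | zero => simp [sa]
  | succ k ih =>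
    simp only [sa, sb, pow_succ]
    have h : sM n = 3 * (n + 3) := rfl
    generalize sM n ^ k = x at *
    rw [h]
    nlinarith

lemma sa_eq (n k : ℕ) : (3 * n + 8) * sa n k + 4 * (n + 3) = 4 * (n + 3) * sM n ^ k := by
  induction k with
  | zero => simp [sa]
  | succ k ih =>
    simp only [sa, sb, pow_succ]
    have h : sM n = 3 * (n + 3) := rfl
    generalize sM n ^ k = x at *
    rw [h]
    nlinarith

lemma sA_bound (n k : ℕ) : 6 * (n + 3) * sA n (k + 1) ≤ (8 * n + 31) * sM n ^ (k + 1) := by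
  induction k with
  | zero =>
    simp only [sA, sa, sb, sM, pow_zero, zero_add, pow_one]
    nlinarith
  | succ k ih =>
    have h1 := sa_eq n (k + 2)
    rw [sA]
    have h : sM n = 3 * (n + 3) := rfl
    rw [pow_succ] at h1 ⊢
    generalize sM n ^ (k + 1) = x at *
    generalize sA n (k + 1) = y at *
    have : sa n (k + 2) = sa n (k + 1 + 1) := rfl
    generalize sa n (k + 1 + 1) = z at *
    rw [this] at h1
    rw [h] at *
    -- 6K*(y+z) ≤ (8K+7)*3K x
    have hn : (0:ℕ) < 3 * n + 8 := by omega
    refine Nat.le_of_mul_le_mul_left ?_ hn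
    have h2 : (3 * n + 8) * z ≤ 4 * (n + 3) * (x * (3 * (n + 3))) := by omega
    have h3 : (3 * n + 8) * (6 * (n + 3) * (y + z)) =
      (3 * n + 8) * (6 * (n + 3) * y) + 6 * (n + 3) * ((3 * n + 8) * z) := by ring
    rw [h3]
    have h4 := Nat.mul_le_mul_left (3 * n + 8) ih
    have h5 := Nat.mul_le_mul_left (6 * (n + 3)) h2
    refine (add_le_add h4 h5).trans ?_
    have : (3 * n + 8) * ((8 * n + 31)) + 6 * (n + 3) * (4 * (n + 3) * (3 * (n + 3))) ≤ 
       (3 * n + 8) * ((8 * n + 31) * ((3 * (n + 3)))) := by nlinarith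
    calc _ = ((3 * n + 8) * ((8 * n + 31)) + 6 * (n + 3) * (4 * (n + 3) * (3 * (n + 3)))) * x := by ring
      _ ≤ _ := Nat.mul_le_mul_right x this
      _ = _ := by ring

lemma pow2P (n k : ℕ) : 2 ^ k * sP n k = (n + 1) * (2 * (n + 2)) ^ k := by
  rw [sP, mul_pow]; ring

lemma key_aux (n k : ℕ) (ho : 8 * so n k ≤ 3 * sM n ^ k) :
    2 * sA n k + 2 * so n k + 2 * (2 ^ k * sP n k) ≤ sb n k := by
  rcases k with _ | k
  · simp [sA, so, sP, sb]; omega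
  · have h1 := sA_bound n k
    have h2 : (2 * (n + 2)) ^ k ≤ sM n ^ k := Nat.pow_le_pow_left (by unfold sM; omega) k
    have h2' := Nat.mul_le_mul_left ((n + 1) * (2 * (n + 2))) h2
    rw [pow2P, sb, pow_succ, pow_succ]
    rw [pow_succ] at ho h1
    have e : (n + 1) * ((2 * (n + 2)) ^ k * (2 * (n + 2))) = (n + 1) * (2 * (n + 2)) * (2 * (n + 2)) ^ k := by ring
    rw [e]
    have h : sM n = 3 * (n + 3) := rfl
    generalize sM n ^ k = x at *
    generalize (n + 1) * (2 * (n + 2)) * (2 * (n + 2)) ^ k = w at *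
    generalize sA n (k+1) = y at *
    generalize so n (k+1) = z at *
    rw [h] at *
    have h3 : 2 * y ≤ (8 * n + 31) * x := by
      refine Nat.le_of_mul_le_mul_left (c := 3 * (n+3)) ?_ (by omega)
      calc _ = 6 * (n + 3) * y := by ring
        _ ≤ _ := h1
        _ = _ := by ring
    nlinarith

lemma so_bound (n k : ℕ) : 8 * so n k ≤ 3 * sM n ^ k := by
  induction k with
  | zero => simp [so]
  | succ k ih =>
    have h1 := key_aux n k ih
    rw [so, pow_succ]
    rw [sb] at h1
    have h : sM n = 3 * (n + 3) := rfl
    generalize sM n ^ k = x at *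
    rw [h]
    nlinarith

lemma key_I (n k : ℕ) : 2 * sA n k + 2 * so n k + 2 * (2 ^ k * sP n k) ≤ sb n k :=
  key_aux n k (so_bound n k)

lemma key_H1 (n k : ℕ) : sa n (k + 1) + sb n k ≤ sb n (k + 1) := by
  have h := sa_bound n (k + 1)
  rw [sb, sb, pow_succ] at *
  have h' : sM n = 3 * (n + 3) := rfl
  generalize sM n ^ k = x at *
  rw [h'] at *
  nlinarith

lemma sum_sa (n k : ℕ) : 16 * ∑ j ∈ Finset.range k, (sa n j + 1) ≤ 3 * sM n ^ k := by
  induction k with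
  | zero => simp
  | succ k ih =>
    rw [Finset.sum_range_succ, pow_succ]
    have h := sa_bound n k
    have h' : sM n = 3 * (n + 3) := rfl
    generalize sM n ^ k = x at *
    rw [h'] at *
    nlinarith

lemma k_pow (k : ℕ) : 9 * k * 2 ^ k ≤ 8 * 3 ^ k := by
  rcases k with _ | _ | k
  · simp
  · simp
  · induction k with
    | zero => simp
    | succ k ih =>
      rw [pow_succ, pow_succ (3:ℕ)]
      have : 0 < 2 ^ (k+1+1) := by positivity
      generalize 2 ^ (k+1+1) = u at *
      generalize 3 ^ (k+1+1) = v at *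
      nlinarith

lemma k_pow2 (n k : ℕ) : (n + 3) * (9 * k * (2 * (n + 2)) ^ k) ≤ 8 * (n + 2) * sM n ^ k := by
  rcases k with _ | k
  · simp
  · have h1 := k_pow (k + 1)
    have h2 : (n + 2) ^ k ≤ (n + 3) ^ k := Nat.pow_le_pow_left (by omega) k
    rw [mul_pow, sM, mul_pow]
    calc (n + 3) * (9 * (k + 1) * (2 ^ (k + 1) * (n + 2) ^ (k + 1)))
        = (9 * (k + 1) * 2 ^ (k + 1)) * ((n + 3) * (n + 2) * (n + 2) ^ k) := by ring
      _ ≤ (8 * 3 ^ (k + 1)) * ((n + 3) * (n + 2) * (n + 3) ^ k) := by gcongr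
      _ = _ := by ring

lemma key_III (n k : ℕ) :
    ∑ j ∈ Finset.range k, ((2 ^ k * sP n k) / sb n j + 1) * (sa n j + 1) + 2 * so n k + sA n k
      ≤ 3 * sM n ^ k := by
  rcases Nat.eq_zero_or_pos k with rfl | hk
  · simp [so, sA]
  obtain ⟨k', rfl⟩ : ∃ k', k = k' + 1 := ⟨k - 1, by omega⟩
  set k := k' + 1 with hkdef
  set ℓ := 2 ^ k * sP n k with hℓ
  have hA := sA_bound n k'
  have ho := so_bound n k
  have hs := sum_sa n k
  have hd : ∀ j, 4 * (n + 3) * ((ℓ / sb n j) * (sa n j + 1)) ≤ 3 * ℓ := by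
    intro j
    have h1 := sa_bound n j
    have h2 : (ℓ / sb n j) * sb n j ≤ ℓ := Nat.div_mul_le_self _ _
    calc 4 * (n + 3) * ((ℓ / sb n j) * (sa n j + 1))
        = 2 * (n + 3) * (ℓ / sb n j) * (2 * (sa n j + 1)) := by ring
      _ ≤ 2 * (n + 3) * (ℓ / sb n j) * (3 * sM n ^ j) := by gcongr
      _ = 3 * ((ℓ / sb n j) * sb n j) := by rw [sb]; ring
      _ ≤ _ := by gcongr
  have hd2 : 4 * (n + 3) * ∑ j ∈ Finset.range k, (ℓ / sb n j) * (sa n j + 1) ≤ k * (3 * ℓ) := by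
    rw [Finset.mul_sum]
    calc _ ≤ ∑ j ∈ Finset.range k, 3 * ℓ := Finset.sum_le_sum fun j _ => hd j
      _ = _ := by simp
  have hk2 := k_pow2 n k
  rw [← hkdef] at hA
  have e : ∑ j ∈ Finset.range k, (ℓ / sb n j + 1) * (sa n j + 1) =
      ∑ j ∈ Finset.range k, (ℓ / sb n j) * (sa n j + 1) + ∑ j ∈ Finset.range k, (sa n j + 1) := by
    rw [← Finset.sum_add_distrib]
    exact Finset.sum_congr rfl fun j _ => by ring
  rw [e]
  have hℓ2 : 3 * (n + 3) * (k * (3 * ℓ)) ≤ 8 * (n + 1) * (n + 2) * sM n ^ k := by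
    rw [hℓ, pow2P]
    calc _ = (n + 1) * ((n + 3) * (9 * k * (2 * (n + 2)) ^ k)) := by ring
      _ ≤ (n + 1) * (8 * (n + 2) * sM n ^ k) := by gcongr
      _ = _ := by ring
  generalize ∑ j ∈ Finset.range k, (ℓ / sb n j) * (sa n j + 1) = T at *
  generalize ∑ j ∈ Finset.range k, (sa n j + 1) = S at *
  generalize sM n ^ k = x at *
  generalize so n k = o at *
  generalize sA n k = A at *
  -- 12 K^2 T ≤ 8 (n+1)(n+2) x
  have hT : 12 * (n + 3) ^ 2 * T ≤ 8 * (n + 1) * (n + 2) * x := by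
    calc _ = 3 * (n + 3) * (4 * (n + 3) * T) := by ring
      _ ≤ 3 * (n + 3) * (k * (3 * ℓ)) := by gcongr
      _ ≤ _ := hℓ2
  refine Nat.le_of_mul_le_mul_left (c := 48 * (n + 3) ^ 2) ?_ (by positivity)
  have hS := Nat.mul_le_mul_left (3 * (n + 3) ^ 2) hs
  have hO := Nat.mul_le_mul_left (12 * (n + 3) ^ 2) ho
  have hA2 := Nat.mul_le_mul_left (8 * (n + 3)) hA
  nlinarith [Nat.zero_le (n * x), Nat.zero_le (n * n * x), Nat.zero_le x]

/-! ### From paths to compatibility -/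

/-- shift of a sequence -/
def dropS (z : ℕ) (s : ℕ → Bool) : ℕ → Bool := fun j => s (z + j)

/-- prepend a letter -/
def consS (a : Bool) (s : ℕ → Bool) : ℕ → Bool
  | 0 => a
  | j + 1 => s j

lemma consS_head (z : ℕ) (s : ℕ → Bool) : dropS z s = consS (s z) (dropS (z + 1) s) := by
  funext j
  cases j with
  | zero => simp [dropS, consS]
  | succ j => simp only [dropS, consS]; congr 1; omega

lemma deleteAt_cons (a : Bool) (s : ℕ → Bool) (i : ℕ) :
    deleteAt (consS a s) (i + 1) = consS a (deleteAt s i) := by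
  funext j
  cases j with
  | zero => simp [deleteAt, consS]
  | succ j => simp [deleteAt, consS]

lemma deleteAt_cons_zero (a : Bool) (s : ℕ → Bool) :
    deleteAt (consS a s) 0 = s := by
  funext j
  simp [deleteAt, consS]

lemma reach1_cons (a : Bool) {s t : ℕ → Bool} (h : Reach1 s t) :
    Reach1 (consS a s) (consS a t) := by
  refine Relation.ReflTransGen.lift (consS a) ?_ _ _ h
  rintro u v ⟨i, rfl⟩
  refine ⟨i + 1, ?_⟩
  unfold delta1
  rw [deleteAt_cons]
  simp only [consS]
  by_cases hh : u i = true <;> simp [hh]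

lemma reach0_cons (a : Bool) {s t : ℕ → Bool} (h : Reach0 s t) :
    Reach0 (consS a s) (consS a t) := by
  refine Relation.ReflTransGen.lift (consS a) ?_ _ _ h
  rintro u v ⟨i, rfl⟩
  refine ⟨i + 1, ?_⟩
  unfold delta0
  rw [deleteAt_cons]
  simp only [consS]
  by_cases hh : u i = true <;> simp [hh]

/-- finite-horizon compatibility -/
def Good (N : ℕ) (s t : ℕ → Bool) : Prop :=
  ∃ s' t', Reach1 s s' ∧ Reach0 t t' ∧ ∀ i < N, s' i = t' i

lemma Good.mono {N N' : ℕ} (h : N' ≤ N) {s t} (hg : Good N s t) : Good N' s t := by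
  obtain ⟨s', t', h1, h2, h3⟩ := hg
  exact ⟨s', t', h1, h2, fun i hi => h3 i (by omega)⟩

lemma good_zero (s t) : Good 0 s t :=
  ⟨s, t, Relation.ReflTransGen.refl, Relation.ReflTransGen.refl, by simp⟩

lemma good_cons {N z x : ℕ} {η ξ : ℕ → Bool} (h : η z = ξ x)
    (hg : Good N (dropS (z + 1) η) (dropS (x + 1) ξ)) : Good (N + 1) (dropS z η) (dropS x ξ) := by
  obtain ⟨s', t', h1, h2, h3⟩ := hg
  refine ⟨consS (η z) s', consS (ξ x) t', ?_, ?_, ?_⟩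
  · rw [consS_head z]; exact reach1_cons _ h1
  · rw [consS_head x]; exact reach0_cons _ h2
  · intro i hi
    cases i with
    | zero => exact h
    | succ i => exact h3 i (by omega)

lemma good_del0 {N x : ℕ} {s ξ : ℕ → Bool} (h : ξ x = false)
    (hg : Good N s (dropS (x + 1) ξ)) : Good N s (dropS x ξ) := by
  obtain ⟨s', t', h1, h2, h3⟩ := hg
  refine ⟨s', t', h1, Relation.ReflTransGen.head ⟨0, ?_⟩ h2, h3⟩
  rw [consS_head x, h, delta0, deleteAt_cons_zero]
  simp [consS]

lemma good_del1 {N z : ℕ} {t η : ℕ → Bool} (h : η z = true)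
    (hg : Good N (dropS (z + 1) η) t) : Good N (dropS z η) t := by
  obtain ⟨s', t', h1, h2, h3⟩ := hg
  refine ⟨s', t', Relation.ReflTransGen.head ⟨0, ?_⟩ h1, h2, h3⟩
  rw [consS_head z, h, delta1, deleteAt_cons_zero]
  simp [consS]

/-- number of ones in `[x, y)` -/
def ones (ξ : ℕ → Bool) (x y : ℕ) : ℕ := ((Finset.Ico x y).filter (fun i => ξ i = true)).card

lemma ones_cons {ξ : ℕ → Bool} {x y : ℕ} (h : x < y) :
    ones ξ x y = (if ξ x = true then 1 else 0) + ones ξ (x + 1) y := by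
  unfold ones
  have : Finset.Ico x y = insert x (Finset.Ico (x + 1) y) := by
    ext i; simp; omega
  rw [this, Finset.filter_insert]
  split_ifs with hx
  · rw [Finset.card_insert_of_notMem (by simp)]; omega
  · simp

lemma good_seg {N : ℕ} {η ξ : ℕ → Bool} (d : ℕ) : ∀ (α z x : ℕ),
    (∀ i, z ≤ i → i < z + α → η i = true) → η (z + α) = false → ξ (x + d) = false →
    ones ξ x (x + d + 1) ≤ α → Good N (dropS (z + α + 1) η) (dropS (x + d + 1) ξ) →
    Good (N + 1) (dropS z η) (dropS x ξ) := by
  induction d with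
  | zero =>
    intro α
    induction α with
    | zero =>
      intro z x _ h0 hx _ hg
      exact good_cons (by simpa using h0.trans hx.symm) (by simpa using hg)
    | succ α ih =>
      intro z x h1 h0 hx ho hg
      refine good_del1 (h1 z le_rfl (by omega)) (ih (z + 1) x (fun i hi hi' => h1 i (by omega) (by omega)) ?_ hx ?_ ?_)
      · rw [← h0]; congr 1; omega
      · rw [ones_cons (by omega)]; simp [ones] at hx ⊢; simp [hx]
      · convert hg using 2; omega
  | succ d ih =>
    intro α z x h1 h0 hx ho hg
    rw [ones_cons (by omega)] at ho
    by_cases hb : ξ x = true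
    · simp only [hb, if_true] at ho
      obtain ⟨β, rfl⟩ : ∃ β, α = β + 1 := ⟨α - 1, by omega⟩
      refine Good.mono (Nat.le_succ _) (good_cons ((h1 z le_rfl (by omega)).trans hb.symm)
        (ih β (z + 1) (x + 1) (fun i hi hi' => h1 i (by omega) (by omega)) ?_ ?_ ?_ ?_))
      · rw [← h0]; congr 1; omega
      · rw [← hx]; congr 1; omega
      · have : x + 1 + d + 1 = x + (d + 1) + 1 := by omega
        rw [this]; omega
      · convert hg using 2 <;> omega
    · simp only [hb] at ho
      refine good_del0 (by simpa using hb) (ih α z (x + 1) h1 h0 ?_ ?_ ?_)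
      · rw [← hx]; congr 1; omega
      · have : x + 1 + d + 1 = x + (d + 1) + 1 := by omega
        rw [this]; simpa using ho
      · convert hg using 2; omega

/-- one admissible step of the path -/
def Step (α : ℕ → ℕ) (ξ : ℕ → Bool) (i x x' : ℕ) : Prop :=
  x < x' ∧ ξ (x' - 1) = false ∧ ones ξ x x' ≤ α i

lemma good_path {η ξ : ℕ → Bool} {Z α : ℕ → ℕ} (hZ : ∀ i, Z (i + 1) = Z i + α i + 1)
    (h1 : ∀ i j, Z i ≤ j → j < Z i + α i → η j = true) (h0 : ∀ i, η (Z i + α i) = false)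
    (N : ℕ) : ∀ (m : ℕ) (X : ℕ → ℕ), (∀ i < N, Step α ξ (m + i) (X i) (X (i + 1))) →
      Good N (dropS (Z m) η) (dropS (X 0) ξ) := by
  induction N with
  | zero => intro m X _; exact good_zero _ _
  | succ N ih =>
    intro m X hX
    have hs := hX 0 (by omega)
    obtain ⟨hs1, hs2, hs3⟩ := hs
    have hi := ih (m + 1) (fun i => X (i + 1)) (fun i hi => by
      have := hX (i + 1) (by omega)
      rwa [show m + (i + 1) = m + 1 + i by omega] at this)
    simp only [zero_add, add_zero] at *
    refine good_seg (X 1 - X 0 - 1) (α m) (Z m) (X 0) (h1 m) (h0 m) ?_ ?_ ?_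
    · rw [← hs2]; congr 1; omega
    · rwa [show X 0 + (X 1 - X 0 - 1) + 1 = X 1 by omega]
    · rwa [show X 0 + (X 1 - X 0 - 1) + 1 = X 1 by omega, ← hZ]

lemma compatible_of_good {η ξ : ℕ → Bool} (h : ∀ N, Good N η ξ) : Compatible η ξ := by
  choose s t h1 h2 h3 using h
  obtain ⟨l, φ, hφ, hl⟩ := CompactSpace.tendsto_subseq s
  refine ⟨s ∘ φ, t ∘ φ, l, fun k => h1 _, fun k => h2 _, hl, ?_⟩
  rw [tendsto_pi_nhds] at hl ⊢
  intro i
  refine (hl i).congr' ?_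
  filter_upwards [eventually_gt_atTop i] with N hN
  exact h3 (φ N) i (lt_of_lt_of_le hN hφ.le_apply)

/-! ### Structure of `η(L)` -/

lemma runLen_spec {η : ℕ → Bool} (hη : Xinf η) (m : ℕ) :
    η (m + runLen η m) = false ∧ ∀ j < runLen η m, η (m + j) = true := by
  have h : ∃ k, η (m + k) = false := by
    obtain ⟨k, hk, hk'⟩ := hη.2 m
    exact ⟨k - m, by rwa [show m + (k - m) = k by omega]⟩
  have e : runLen η m = Nat.find h := by
    unfold runLen
    rw [dif_pos h]
  rw [e]
  refine ⟨Nat.find_spec h, fun j hj => ?_⟩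
  simpa using Nat.find_min h hj

lemma zetaL_bdd (n j : ℕ) : BddAbove {k | (n + 2) ^ k ∣ j + 1} := by
  refine ⟨j + 1, fun k hk => ?_⟩
  have h1 : (n + 2) ^ k ≤ j + 1 := Nat.le_of_dvd (by omega) hk
  exact (Nat.lt_pow_self (by omega : 1 < n + 2)).le.trans h1

lemma zetaL_ge (n j k : ℕ) (h : (n + 2) ^ k ∣ j + 1) : k ≤ zetaL (n + 2) j :=
  le_csSup (zetaL_bdd n j) h

lemma zetaL_zero (n j : ℕ) (h : ¬ (n + 2) ∣ j + 1) : zetaL (n + 2) j = 0 := by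
  refine Nat.le_zero.1 (csSup_le ⟨0, by simp⟩ ?_)
  intro k hk
  by_contra hc
  exact h ((dvd_pow_self (n + 2) (by omega)).trans hk)

lemma tzeta_ge (n j k : ℕ) (h : (n + 2) ^ (k + 1) ∣ j + 1) : 3 * sM n ^ k ≤ tzeta (n + 2) j := by
  have h1 := zetaL_ge n j (k + 1) h
  unfold tzeta
  rw [if_neg (by omega)]
  have : sM n = 3 * (n + 2 + 1) := rfl
  rw [← this]
  exact Nat.mul_le_mul_left 3 (Nat.pow_le_pow_right (by rw [this]; omega) (by omega))

lemma tzeta_zero (n j : ℕ) (h : ¬ (n + 2) ∣ j + 1) : tzeta (n + 2) j = 0 := by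
  unfold tzeta
  rw [if_pos (zetaL_zero n j h)]

/-- index (in the weighted word) at which the block ending at the `i`-th zero starts -/
def ix (n i : ℕ) : ℕ := i + (i - 1) / (n + 1)

lemma ix_mul (n q : ℕ) (hq : 1 ≤ q) : ix n ((n + 1) * q) + 1 = q * (n + 2) := by
  obtain ⟨q, rfl⟩ : ∃ q', q = q' + 1 := ⟨q - 1, by omega⟩
  unfold ix
  have : ((n + 1) * (q + 1) - 1) / (n + 1) = q := by
    rw [show (n + 1) * (q + 1) - 1 = n + (n + 1) * q by
      have : (n + 1) * (q + 1) = n + (n + 1) * q + 1 := by ring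
      omega]
    rw [Nat.add_mul_div_left _ _ (by omega), Nat.div_eq_of_lt (by omega)]; omega
  rw [this]; ring

lemma ix_mul_succ (n q : ℕ) (hq : 1 ≤ q) : ix n ((n + 1) * q + 1) = ix n ((n + 1) * q) + 2 := by
  have h := ix_mul n q hq
  have : ix n ((n + 1) * q + 1) = (n + 1) * q + 1 + q := by
    unfold ix
    rw [Nat.add_sub_cancel, Nat.mul_div_cancel_left _ (by omega)]
  rw [this]
  have : q * (n + 2) = (n + 1) * q + q := by ring
  omega

lemma ix_other (n i : ℕ) (h : ¬ (n + 1) ∣ i) :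
    ix n (i + 1) = ix n i + 1 ∧ ¬ (n + 2) ∣ ix n i + 1 := by
  obtain ⟨q, r, hr, rfl⟩ : ∃ q r, r < n + 1 ∧ i = r + (n + 1) * q :=
    ⟨i / (n + 1), i % (n + 1), Nat.mod_lt _ (by omega), (Nat.mod_add_div _ _).symm⟩
  have hr0 : r ≠ 0 := by
    rintro rfl
    exact h ⟨q, by ring⟩
  have e1 : (r + (n + 1) * q + 1 - 1) / (n + 1) = q := by
    rw [Nat.add_sub_cancel, Nat.add_mul_div_left _ _ (by omega), Nat.div_eq_of_lt hr]; omega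
  have e2 : (r + (n + 1) * q - 1) / (n + 1) = q := by
    rw [show r + (n + 1) * q - 1 = (r - 1) + (n + 1) * q by omega,
      Nat.add_mul_div_left _ _ (by omega), Nat.div_eq_of_lt (by omega)]; omega
  unfold ix
  rw [e1, e2]
  refine ⟨by omega, ?_⟩
  rw [show r + (n + 1) * q + q + 1 = (r + 1) + (n + 2) * q by ring]
  intro hd
  have := (Nat.dvd_add_left (Dvd.intro q rfl)).1 hd
  have := Nat.le_of_dvd (by omega) this
  omega

lemma eta_struct (n : ℕ) (η : ℕ → Bool) (hη : Xinf η) (hf : fmap η = tzeta (n + 2)) :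
    ∃ Z α : ℕ → ℕ, Z 0 = 0 ∧ (∀ i, Z (i + 1) = Z i + α i + 1) ∧
      (∀ i j, Z i ≤ j → j < Z i + α i → η j = true) ∧ (∀ i, η (Z i + α i) = false) ∧
      ∀ i k, 1 ≤ i → sP n k ∣ i → 3 * sM n ^ k ≤ α i := by
  have hr : ∀ j, runLen η (fpos η j) = tzeta (n + 2) j := fun j => congrFun hf j
  refine ⟨fun i => fpos η (ix n i), fun i => tzeta (n + 2) (ix n i), by simp [ix, fpos], ?_, ?_, ?_, ?_⟩
  · intro i
    have hs : ∀ j, fpos η (j + 1) = fpos η j + max (tzeta (n + 2) j) 1 := by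
      intro j
      rw [fpos, hr]
    by_cases h : (n + 1) ∣ i ∧ 1 ≤ i
    · obtain ⟨⟨q, rfl⟩, hi⟩ := h
      have hq : 1 ≤ q := by
        rcases Nat.eq_zero_or_pos q with rfl | h
        · simp at hi
        · exact h
      have e := ix_mul n q hq
      simp only
      rw [ix_mul_succ n q hq, hs, hs]
      have h1 : tzeta (n + 2) (ix n ((n + 1) * q) + 1) = 0 := by
        refine tzeta_zero _ _ ?_
        rw [e]
        intro hd
        have := (Nat.dvd_add_right (Dvd.intro_left q rfl)).1 hd
        have := Nat.le_of_dvd (by omega) this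
        omega
      have h2 := tzeta_ge n (ix n ((n + 1) * q)) 0 (by rw [e]; simp)
      rw [h1]
      simp only [pow_zero] at h2
      omega
    · have h' : ix n (i + 1) = ix n i + 1 ∧ ¬ (n + 2) ∣ ix n i + 1 := by
        rcases Nat.eq_zero_or_pos i with rfl | hi
        · simp [ix]
        · exact ix_other n i (fun hd => h ⟨hd, hi⟩)
      simp only
      rw [h'.1, hs, tzeta_zero _ _ h'.2]; simp
  · intro i j h1 h2
    simp only at h1 h2
    rw [← hr] at h2
    have := (runLen_spec hη (fpos η (ix n i))).2 (j - fpos η (ix n i)) (by omega)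
    rwa [show fpos η (ix n i) + (j - fpos η (ix n i)) = j by omega] at this
  · intro i
    simp only
    rw [← hr]
    exact (runLen_spec hη _).1
  · rintro i k hi ⟨c, rfl⟩
    refine tzeta_ge _ _ _ ?_
    have e : sP n k * c = (n + 1) * ((n + 2) ^ k * c) := by unfold sP; ring
    rw [e] at hi ⊢
    have : 1 ≤ (n + 2) ^ k * c := by
      rcases Nat.eq_zero_or_pos ((n + 2) ^ k * c) with h | h
      · rw [h] at hi; simp at hi
      · exact h
    rw [ix_mul n _ this]
    exact ⟨c, by ring⟩

/-! ### Sparse sets -/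

/-- hierarchical sets of exceptional ones -/
def EE (n : ℕ) (ξ : ℕ → Bool) : ℕ → Set ℕ
  | 0 => {x | ξ x = true}
  | k + 1 => {x | x ∈ EE n ξ k ∧ ∃ y ∈ EE n ξ k,
      (x + sa n k < y ∧ y ≤ x + sb n k) ∨ (y + sa n k < x ∧ x ≤ y + sb n k)}

lemma chain (n : ℕ) (ξ : ℕ → Bool) (k : ℕ) : ∀ z ∈ EE n ξ k,
    (∀ w ∈ EE n ξ k, z + sa n k < w → z + sb n k < w) →
    ∃ y, z ≤ y ∧ y + 2 ≤ z + sA n k ∧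
      ∀ j ≤ k, ∀ w ∈ EE n ξ j, y < w → y + sb n j + 2 < w + sA n j := by
  induction k with
  | zero =>
    intro z _ hz
    refine ⟨z, le_rfl, by simp [sA], ?_⟩
    intro j hj w hw hzw
    obtain rfl : j = 0 := by omega
    have := hz w hw (by simpa [sa] using hzw)
    simp only [sA]; omega
  | succ k ih =>
    intro z hz hfree
    obtain ⟨u, ⟨hu1, hu2, hu3⟩, hmax⟩ : ∃ u, (u ∈ EE n ξ (k + 1) ∧ z ≤ u ∧ u ≤ z + sa n (k + 1)) ∧
        ∀ w ∈ EE n ξ (k + 1), u < w → z + sa n (k + 1) < w := by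
      classical
      set S := (Finset.Icc z (z + sa n (k + 1))).filter (· ∈ EE n ξ (k + 1)) with hS
      have hne : S.Nonempty := ⟨z, by simp [hS, hz]⟩
      have hm := S.max'_mem hne
      refine ⟨S.max' hne, ?_, ?_⟩
      · have hm := Finset.mem_filter.1 hm
        rw [Finset.mem_Icc] at hm
        exact ⟨hm.2, hm.1.1, hm.1.2⟩
      · intro w hw hlt
        by_contra hc
        have hz' : z ≤ S.max' hne := by
          exact (Finset.mem_Icc.1 (Finset.mem_filter.1 hm).1).1
        have : w ∈ S := by
          simp only [hS, Finset.mem_filter, Finset.mem_Icc]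
          exact ⟨by omega, hw⟩
        have := S.le_max' w this
        omega
    have hH := key_H1 n k
    obtain ⟨y, hy1, hy2, hy3⟩ := ih u hu1.1 (by
      intro w hw hlt
      by_contra hc
      have hw' : w ∈ EE n ξ (k + 1) := ⟨hw, u, hu1.1, Or.inr ⟨hlt, by omega⟩⟩
      have h1 := hmax w hw' (by omega)
      have h2 := hfree w hw' h1
      omega)
    refine ⟨y, by omega, by rw [sA]; omega, ?_⟩
    intro j hj w hw hlt
    rcases Nat.lt_or_ge j (k + 1) with h | h
    · exact hy3 j (by omega) w hw hlt
    · obtain rfl : j = k + 1 := by omega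
      have h1 := hmax w hw (by omega)
      have h2 := hfree w hw h1
      rw [sA]; omega

open Classical in
/-- points of `S` in `[x, y)` -/
noncomputable def cset (S : Set ℕ) (x y : ℕ) : Finset ℕ := (Finset.Ico x y).filter (· ∈ S)

lemma mem_cset {S : Set ℕ} {x y w : ℕ} : w ∈ cset S x y ↔ (x ≤ w ∧ w < y) ∧ w ∈ S := by
  simp [cset]

/-- number of points of `S` in `[x, y)` -/
noncomputable def cnt (S : Set ℕ) (x y : ℕ) : ℕ := (cset S x y).card

lemma cnt_split (S : Set ℕ) {x y z : ℕ} (h1 : x ≤ y) (h2 : y ≤ z) :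
    cnt S x z = cnt S x y + cnt S y z := by
  classical
  unfold cnt cset
  rw [← Finset.Ico_union_Ico_eq_Ico h1 h2, Finset.filter_union, Finset.card_union_of_disjoint]
  exact Finset.disjoint_filter_filter (Finset.Ico_disjoint_Ico_consecutive x y z)

lemma cnt_le (S : Set ℕ) (x y : ℕ) : cnt S x y ≤ y - x := by
  classical
  unfold cnt cset
  exact (Finset.card_filter_le _ _).trans (by simp)

lemma ones_eq_cnt (n : ℕ) (ξ : ℕ → Bool) (x y : ℕ) : ones ξ x y = cnt (EE n ξ 0) x y := by
  classical
  unfold ones cnt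
  congr 1
  ext i
  simp [EE, mem_cset]

lemma cnt_block (n : ℕ) (ξ : ℕ → Bool) (j x y : ℕ) (h : y ≤ x + sb n j) :
    cnt (EE n ξ j \ EE n ξ (j + 1)) x y ≤ sa n j + 1 := by
  classical
  unfold cnt
  set S := cset (EE n ξ j \ EE n ξ (j + 1)) x y with hS
  rcases S.eq_empty_or_nonempty with he | hne
  · simp [he]
  · have hm := S.min'_mem hne
    set u := S.min' hne with hu
    have hm' := mem_cset.1 hm
    have : S ⊆ Finset.Icc u (u + sa n j) := by
      intro w hw
      have h1 := S.min'_le w hw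
      rw [← hu] at h1
      rw [hS, mem_cset] at hw
      rw [Finset.mem_Icc]
      refine ⟨h1, ?_⟩
      by_contra hc
      exact hm'.2.2 ⟨hm'.2.1, w, hw.2.1, Or.inl ⟨by omega, by omega⟩⟩
    refine (Finset.card_le_card this).trans ?_
    simp; omega

lemma cnt_len (n : ℕ) (ξ : ℕ → Bool) (j q : ℕ) : ∀ x y, y ≤ x + sb n j * (q + 1) →
    cnt (EE n ξ j \ EE n ξ (j + 1)) x y ≤ (q + 1) * (sa n j + 1) := by
  induction q with
  | zero =>
    intro x y h
    simpa using cnt_block n ξ j x y (by simpa using h)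
  | succ q ih =>
    intro x y h
    rcases Nat.lt_or_ge y (x + sb n j) with h' | h'
    · have := cnt_block n ξ j x y h'.le
      nlinarith
    · rw [cnt_split _ (by omega : x ≤ x + sb n j) h']
      have h1 := cnt_block n ξ j x (x + sb n j) le_rfl
      have h2 := ih (x + sb n j) y (by linarith)
      linarith

lemma cnt_sum (n : ℕ) (ξ : ℕ → Bool) (x y k : ℕ) : cnt (EE n ξ 0) x y ≤
    ∑ j ∈ Finset.range k, cnt (EE n ξ j \ EE n ξ (j + 1)) x y + cnt (EE n ξ k) x y := by
  classical
  induction k with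
  | zero => simp
  | succ k ih =>
    rw [Finset.sum_range_succ]
    have : cnt (EE n ξ k) x y ≤ cnt (EE n ξ k \ EE n ξ (k + 1)) x y + cnt (EE n ξ (k + 1)) x y := by
      unfold cnt
      refine le_trans (Finset.card_le_card ?_) (Finset.card_union_le _ _)
      intro w hw
      simp only [mem_cset, Finset.mem_union, Set.mem_sdiff] at hw ⊢
      tauto
    omega

lemma ones_bound (n : ℕ) (ξ : ℕ → Bool) (x y k ℓ : ℕ) (hℓ : y ≤ x + ℓ)
    (hfree : ∀ w ∈ EE n ξ k, x ≤ w → y ≤ w) :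
    ones ξ x y ≤ ∑ j ∈ Finset.range k, (ℓ / sb n j + 1) * (sa n j + 1) := by
  classical
  rw [ones_eq_cnt n]
  refine (cnt_sum n ξ x y k).trans ?_
  have h0 : cnt (EE n ξ k) x y = 0 := by
    unfold cnt
    rw [Finset.card_eq_zero, Finset.eq_empty_iff_forall_notMem]
    intro w hw
    rw [mem_cset] at hw
    have := hfree w hw.2 hw.1.1
    omega
  rw [h0, add_zero]
  refine Finset.sum_le_sum fun j _ => cnt_len n ξ j _ x y ?_
  have hb : 0 < sb n j := by unfold sb sM; positivity
  have := Nat.lt_mul_div_succ ℓ hb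
  rw [Nat.mul_comm] at this
  nlinarith

/-- no point of `EE j` shortly after `x`, for `j < k` -/
def Safe (n : ℕ) (ξ : ℕ → Bool) (k x : ℕ) : Prop :=
  ∀ j < k, ∀ w ∈ EE n ξ j, x ≤ w → x + sb n j < w + sA n j

/-- the path statement -/
def PathTo (n : ℕ) (α : ℕ → ℕ) (ξ : ℕ → Bool) (k m x t : ℕ) : Prop :=
  ∃ (C : ℕ) (X : ℕ → ℕ), X 0 = x ∧ X C ≤ t ∧ t ≤ X C + so n k ∧
    (∀ i < C, Step α ξ (m + i) (X i) (X (i + 1))) ∧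
    (∀ c ≤ C, X c ≤ x + 2 ^ k * c) ∧
    (∀ c ≤ C, X C ≤ X c + 2 ^ k * (C - c) + so n k)

lemma path_mono {α : ℕ → ℕ} {ξ : ℕ → Bool} {m C : ℕ} {X : ℕ → ℕ}
    (h : ∀ i < C, Step α ξ (m + i) (X i) (X (i + 1))) {c d : ℕ} (hcd : c ≤ d) (hd : d ≤ C) :
    X c ≤ X d := by
  induction d, hcd using Nat.le_induction with
  | base => exact le_rfl
  | succ d hcd ih => exact (ih (by omega)).trans (h d (by omega)).1.le

lemma ones_split (ξ : ℕ → Bool) {x y z : ℕ} (h1 : x ≤ y) (h2 : y ≤ z) :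
    ones ξ x z = ones ξ x y + ones ξ y z := by
  rw [ones_eq_cnt 0, ones_eq_cnt 0, ones_eq_cnt 0, cnt_split _ h1 h2]

lemma ones_le (ξ : ℕ → Bool) (x y : ℕ) : ones ξ x y ≤ y - x := by
  rw [ones_eq_cnt 0]; exact cnt_le _ _ _

lemma path_succ (n : ℕ) (α : ℕ → ℕ) (ξ : ℕ → Bool) (k : ℕ)
    (hα : ∀ i k, 1 ≤ i → sP n k ∣ i → 3 * sM n ^ k ≤ α i)
    (ih : ∀ m x t, Safe n ξ k x → x ≤ t → (∀ w ∈ EE n ξ k, x ≤ w → t < w) →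
      PathTo n α ξ k m x t) (D : ℕ) :
    ∀ m x t, t - x < D → Safe n ξ (k + 1) x → x ≤ t → (∀ w ∈ EE n ξ (k + 1), x ≤ w → t < w) →
      PathTo n α ξ (k + 1) m x t := by
  induction D with
  | zero => intro m x t h; omega
  | succ D ihD =>
  intro m x t hD hsafe hxt hfree
  have hsafe' : Safe n ξ k x := fun j hj => hsafe j (by omega)
  have hpow : (2:ℕ) ^ (k + 1) = 2 * 2 ^ k := by ring
  have hpk : 1 ≤ (2:ℕ) ^ k := Nat.one_le_two_pow
  by_cases hno : ∀ w ∈ EE n ξ k, x ≤ w → t < w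
  · obtain ⟨C, X, h1, h2, h3, h4, h5, h6⟩ := ih m x t hsafe' hxt hno
    refine ⟨C, X, h1, h2, by rw [so]; omega, h4, ?_, ?_⟩
    · intro c hc
      have := h5 c hc
      rw [hpow, mul_assoc]; omega
    · intro c hc
      have := h6 c hc
      rw [hpow, mul_assoc, so]; omega
  · push Not at hno
    have hex : ∃ w, w ∈ EE n ξ k ∧ x ≤ w := by
      obtain ⟨w, hw, hw', _⟩ := hno
      exact ⟨w, hw, hw'⟩
    obtain ⟨z, hz, hxz, hmin⟩ : ∃ z, z ∈ EE n ξ k ∧ x ≤ z ∧ ∀ w ∈ EE n ξ k, x ≤ w → z ≤ w := by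
      classical
      exact ⟨Nat.find hex, (Nat.find_spec hex).1, (Nat.find_spec hex).2,
        fun w hw hw' => Nat.find_min' hex ⟨hw, hw'⟩⟩
    have hzt : z ≤ t := by
      obtain ⟨w, hw, hw', hw''⟩ := hno
      exact (hmin w hw hw').trans hw''
    have hI := key_I n k
    have hIII := key_III n k
    set ℓ := 2 ^ k * sP n k with hℓ
    have hzb := hsafe k (by omega) z hz hxz
    have hP : 0 < sP n k := by unfold sP; positivity
    have hℓ1 : 1 ≤ ℓ := Nat.mul_pos (by omega) hP
    obtain ⟨C, X, h1, h2, h3, h4, h5, h6⟩ := ih m x (z - 1) hsafe' (by omega)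
      (fun w hw hw' => by have := hmin w hw hw'; omega)
    have hC5 := h5 C le_rfl
    -- choose the good index
    have hmod : (m + C) % sP n k < sP n k := Nat.mod_lt _ hP
    have hPC : sP n k ≤ C := by
      refine Nat.le_of_mul_le_mul_left (c := 2 ^ k) ?_ (by omega)
      rw [← hℓ]; omega
    set s := C - (m + C) % sP n k with hs
    have hsC : s ≤ C := by omega
    have hs1 : 1 ≤ s := by omega
    have hsP : C + 1 ≤ s + sP n k := by omega
    have hdvd : sP n k ∣ m + s := by
      have : m + s = (m + C) - (m + C) % sP n k := by omega
      rw [this]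
      exact Nat.dvd_sub_mod _
    have hcap := hα (m + s) k (by omega) hdvd
    have hsP2 : 2 ^ k * C + 2 ^ k ≤ 2 ^ k * s + ℓ := by
      have := Nat.mul_le_mul_left (2 ^ k) hsP
      rw [hℓ]; linarith
    -- general bounds from `z`
    have hzc : ∀ c ≤ s, z + 2 ^ k ≤ 1 + X c + 2 ^ k * (s - c) + ℓ + 2 * so n k := by
      intro c hc
      have h := h6 c (by omega)
      have e : 2 ^ k * (C - c) + 2 ^ k ≤ 2 ^ k * (s - c) + ℓ := by
        have : C - c + 1 ≤ (s - c) + sP n k := by omega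
        have := Nat.mul_le_mul_left (2 ^ k) this
        rw [hℓ]; linarith
      omega
    obtain ⟨y, hy1, hy2, hy3⟩ := chain n ξ k z hz (by
      intro w hw hlt
      by_contra hc
      have : z ∈ EE n ξ (k + 1) := ⟨hz, w, hw, Or.inl ⟨hlt, by omega⟩⟩
      have := hfree z this hxz
      omega)
    have hXsC := path_mono h4 hsC le_rfl
    have hzs := hzc s le_rfl
    simp only [Nat.sub_self, mul_zero, add_zero] at hzs
    have hstep : Step α ξ (m + s) (X s) (y + 2) := by
      refine ⟨by omega, ?_, ?_⟩
      · by_contra hc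
        have hc' : y + 1 ∈ EE n ξ 0 := by
          have : y + 2 - 1 = y + 1 := by omega
          rw [this] at hc
          simpa [EE] using hc
        have := hy3 0 (by omega) (y + 1) hc' (by omega)
        simp [sA, sb] at this
      · refine le_trans ?_ hcap
        refine le_trans ?_ hIII
        have hv1 : X s ≤ min z (X s + ℓ) := by omega
        rw [ones_split ξ hv1 (by omega : min z (X s + ℓ) ≤ y + 2)]
        have hb1 := ones_bound n ξ (X s) (min z (X s + ℓ)) k ℓ (by omega) (by
          intro w hw hw'
          have hx0 := path_mono h4 (Nat.zero_le s) hsC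
          have := hmin w hw (by omega)
          omega)
        have hb2 := ones_le ξ (min z (X s + ℓ)) (y + 2)
        omega
    have hsafe2 : Safe n ξ (k + 1) (y + 2) := by
      intro j hj w hw hle
      have := hy3 j (by omega) w hw (by omega)
      omega
    have hlin : y + 2 ≤ x + 2 ^ (k + 1) * (s + 1) := by
      have : 2 ^ (k + 1) * (s + 1) = 2 * (2 ^ k * s) + 2 * 2 ^ k := by ring
      omega
    rcases Nat.lt_or_ge t (y + 2) with hty | hty
    · refine ⟨s, X, h1, by omega, by rw [so]; omega, fun i hi => h4 i (by omega), ?_, ?_⟩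
      · intro c hc
        have := h5 c (by omega)
        rw [hpow, mul_assoc]; omega
      · intro c hc
        have := hzc c hc
        rw [hpow, mul_assoc, so]; omega
    · obtain ⟨C', X', g1, g2, g3, g4, g5, g6⟩ := ihD (m + s + 1) (y + 2) t (by omega) hsafe2 hty
        (fun w hw hw' => hfree w hw (by omega))
      refine ⟨s + 1 + C', fun i => if i ≤ s then X i else X' (i - (s + 1)), ?_, ?_, ?_, ?_, ?_, ?_⟩
      · simp [h1]
      · simp only [show ¬ (s + 1 + C' ≤ s) by omega, if_false, Nat.add_sub_cancel_left]; exact g2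
      · simp only [show ¬ (s + 1 + C' ≤ s) by omega, if_false, Nat.add_sub_cancel_left]; exact g3
      · intro i hi
        rcases lt_trichotomy i s with h | h | h
        · simp only [show i ≤ s by omega, show i + 1 ≤ s by omega, if_true]
          exact h4 i (by omega)
        · rw [h]
          simp only [le_refl, if_true, show ¬ (s + 1 ≤ s) by omega, if_false, Nat.sub_self, g1]
          exact hstep
        · simp only [show ¬ (i ≤ s) by omega, show ¬ (i + 1 ≤ s) by omega, if_false]
          have := g4 (i - (s + 1)) (by omega)
          rw [show m + s + 1 + (i - (s + 1)) = m + i by omega,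
            show i - (s + 1) + 1 = i + 1 - (s + 1) by omega] at this
          exact this
      · intro c hc
        by_cases h : c ≤ s
        · simp only [h, if_true]
          have := h5 c (by omega)
          rw [hpow, mul_assoc]; omega
        · simp only [h, if_false]
          have := g5 (c - (s + 1)) (by omega)
          have e : 2 ^ (k + 1) * c = 2 ^ (k + 1) * (s + 1) + 2 ^ (k + 1) * (c - (s + 1)) := by
            rw [← mul_add]; congr 1; omega
          omega
      · intro c hc
        simp only [show ¬ (s + 1 + C' ≤ s) by omega, if_false, Nat.add_sub_cancel_left]
        by_cases h : c ≤ s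
        · simp only [h, if_true]
          have a1 := g5 C' le_rfl
          have a2 := hzc c h
          have e : 2 ^ (k + 1) * (s + 1 + C' - c) =
              2 * (2 ^ k * (s - c)) + 2 * 2 ^ k + 2 ^ (k + 1) * C' := by
            rw [show s + 1 + C' - c = (s - c) + 1 + C' by omega]; ring
          rw [e, so]; omega
        · simp only [h, if_false]
          have := g6 (c - (s + 1)) (by omega)
          rwa [show C' - (c - (s + 1)) = s + 1 + C' - c by omega] at this

lemma path_all (n : ℕ) (α : ℕ → ℕ) (ξ : ℕ → Bool)
    (hα : ∀ i k, 1 ≤ i → sP n k ∣ i → 3 * sM n ^ k ≤ α i) (k : ℕ) :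
    ∀ m x t, Safe n ξ k x → x ≤ t → (∀ w ∈ EE n ξ k, x ≤ w → t < w) →
      PathTo n α ξ k m x t := by
  induction k with
  | zero =>
    intro m x t _ hxt hfree
    refine ⟨t - x, fun i => x + i, rfl, by simp only; omega, by simp only; omega, ?_, ?_, ?_⟩
    · intro i hi
      have hf : ξ (x + i) = false := by
        by_contra hc
        have : x + i ∈ EE n ξ 0 := by simpa [EE] using hc
        have := hfree _ this (by omega)
        omega
      refine ⟨by simp only; omega, by simpa using hf, ?_⟩
      simp only
      rw [← add_assoc, ones_cons (by omega)]
      simp [hf, ones]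
    · intro c _; simp
    · intro c hc; simp [so]; omega
  | succ k ih =>
    intro m x t
    exact path_succ n α ξ k hα ih (t - x + 1) m x t (by omega)

lemma compatible_of_safe (n : ℕ) (η ξ : ℕ → Bool) (hη : Xinf η) (hf : fmap η = tzeta (n + 2))
    (hs : ∀ k, ∀ w ∈ EE n ξ k, sb n k < w + sA n k) : Compatible η ξ := by
  obtain ⟨Z, α, hZ0, hZ, h1, h0, hα⟩ := eta_struct n η hη hf
  refine compatible_of_good fun N => ?_
  have hI := key_I n N
  obtain ⟨C, X, g1, g2, g3, g4, g5, g6⟩ := path_all n α ξ hα N 0 0 (sb n N - sA n N)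
    (fun j _ w hw _ => by have := hs j w hw; omega) (by omega)
    (fun w hw _ => by have := hs N w hw; omega)
  have h5 := g5 C le_rfl
  have hC : sP n N ≤ C := by
    refine Nat.le_of_mul_le_mul_left (c := 2 ^ N) ?_ (by positivity)
    omega
  have hN : N ≤ sP n N := by
    unfold sP
    have := (Nat.lt_pow_self (by omega : 1 < n + 2) (n := N)).le
    nlinarith
  have := good_path hZ h1 h0 C 0 X g4
  rw [hZ0, g1] at this
  have e : ∀ s, dropS 0 s = s := fun s => by funext j; simp [dropS]
  rw [e, e] at this
  exact this.mono (by omega)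

/-! ### Probability estimates -/

/-- radius of witnesses -/
def sR (n : ℕ) : ℕ → ℕ
  | 0 => 0
  | k + 1 => sR n k + sb n k

/-- number of witnesses -/
def sN (n : ℕ) : ℕ → ℕ
  | 0 => 1
  | k + 1 => 2 * sb n k * (sN n k * sN n k)

lemma sR_eq (n k : ℕ) : 2 * sR n k = sa n k := by
  induction k with
  | zero => rfl
  | succ k ih => rw [sR, sa]; omega

lemma sN_eq (n k : ℕ) : sN n k * (12 * (n + 3) ^ 2 * sM n ^ k) = (12 * (n + 3) ^ 2) ^ (2 ^ k) := by
  induction k with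
  | zero => simp [sN]
  | succ k ih =>
    rw [pow_succ 2 k, pow_mul, ← ih, sN, sb, pow_succ (sM n) k]
    have h : sM n = 3 * (n + 3) := rfl
    generalize sM n ^ k = x at *
    rw [h]
    ring

lemma witness (n k : ℕ) : ∀ x, ∃ W : Finset (Finset ℕ),
    (∀ S ∈ W, S.card = 2 ^ k ∧ ∀ i ∈ S, i ≤ x + sR n k ∧ x ≤ i + sR n k) ∧
    W.card ≤ sN n k ∧ ∀ ξ : ℕ → Bool, x ∈ EE n ξ k → ∃ S ∈ W, ∀ i ∈ S, ξ i = true := by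
  classical
  induction k with
  | zero =>
    intro x
    refine ⟨{{x}}, by simp [sR], by simp [sN], ?_⟩
    intro ξ h
    simpa [EE] using h
  | succ k ih =>
    choose W h1 h2 h3 using ih
    intro x
    have hR := sR_eq n k
    set Y : Finset ℕ := ((Finset.Icc (x - sb n k) (x + sb n k)).erase x).filter (fun y =>
      (x + sa n k < y ∧ y ≤ x + sb n k) ∨ (y + sa n k < x ∧ x ≤ y + sb n k)) with hY
    refine ⟨Y.biUnion (fun y => Finset.image₂ (· ∪ ·) (W x) (W y)), ?_, ?_, ?_⟩
    · intro U hU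
      rw [Finset.mem_biUnion] at hU
      obtain ⟨y, hy, hU⟩ := hU
      rw [Finset.mem_image₂] at hU
      obtain ⟨S, hS, T, hT, rfl⟩ := hU
      have hy' := (Finset.mem_filter.1 hy).2
      obtain ⟨cS, rS⟩ := h1 x S hS
      obtain ⟨cT, rT⟩ := h1 y T hT
      refine ⟨?_, ?_⟩
      · rw [Finset.card_union_of_disjoint, cS, cT, pow_succ]
        · ring
        · rw [Finset.disjoint_left]
          intro i hi hi'
          have := rS i hi
          have := rT i hi'
          omega
      · intro i hi
        rw [sR]
        rcases Finset.mem_union.1 hi with hi | hi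
        · have := rS i hi
          omega
        · have := rT i hi
          omega
    · have hc : Y.card ≤ 2 * sb n k := by
        refine (Finset.card_filter_le _ _).trans ?_
        rw [Finset.card_erase_of_mem (by simp)]
        simp; omega
      rw [sN]
      refine (Finset.card_biUnion_le_card_mul Y _ (sN n k * sN n k) ?_).trans
        (Nat.mul_le_mul_right _ hc)
      intro y _
      exact (Finset.card_image₂_le _ _ _).trans (Nat.mul_le_mul (h2 x) (h2 y))
    · intro ξ hx
      obtain ⟨hx1, y, hy, hxy⟩ := hx
      obtain ⟨S, hS, hS'⟩ := h3 x ξ hx1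
      obtain ⟨T, hT, hT'⟩ := h3 y ξ hy
      refine ⟨S ∪ T, ?_, ?_⟩
      · rw [Finset.mem_biUnion]
        refine ⟨y, ?_, Finset.mem_image₂.2 ⟨S, hS, T, hT, rfl⟩⟩
        simp only [hY, Finset.mem_filter, Finset.mem_erase, Finset.mem_Icc]
        refine ⟨⟨?_, ?_⟩, hxy⟩ <;> omega
      · intro i hi
        rcases Finset.mem_union.1 hi with hi | hi
        · exact hS' i hi
        · exact hT' i hi

lemma prob_EE (n k x : ℕ) (p : ℝ) (μ : Measure (ℕ → Bool)) (hμ : IsBernoulliProduct μ p) :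
    μ {ξ | x ∈ EE n ξ k} ≤ sN n k * ENNReal.ofReal p ^ (2 ^ k) := by
  obtain ⟨W, h1, h2, h3⟩ := witness n k x
  have hsub : {ξ | x ∈ EE n ξ k} ⊆ ⋃ S ∈ W, {ξ : ℕ → Bool | ∀ i ∈ S, ξ i = true} := by
    intro ξ hξ
    obtain ⟨S, hS, hS'⟩ := h3 ξ hξ
    simp only [Set.mem_iUnion]
    exact ⟨S, hS, hS'⟩
  refine (measure_mono hsub).trans ((measure_biUnion_finset_le W _).trans ?_)
  have : ∀ S ∈ W, μ {ξ : ℕ → Bool | ∀ i ∈ S, ξ i = true} = ENNReal.ofReal p ^ (2 ^ k) := by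
    intro S hS
    have := hμ.2 S (fun _ => true)
    rw [this]
    simp [(h1 S hS).1]
  rw [Finset.sum_congr rfl this, Finset.sum_const, nsmul_eq_mul]
  gcongr

lemma prob_level (n k : ℕ) (p : ℝ) (hp0 : 0 ≤ p) (hp : p < 1 / (576 * ((n : ℝ) + 3) ^ 2))
    (μ : Measure (ℕ → Bool)) (hμ : IsBernoulliProduct μ p) :
    μ {ξ | ∃ w ∈ EE n ξ k, w + sA n k ≤ sb n k} ≤ ENNReal.ofReal ((1 / 2) ^ k / 4) := by
  have hA : 1 ≤ sA n k := by
    induction k with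
    | zero => simp [sA]
    | succ k ih => rw [sA]; omega
  have hsub : {ξ | ∃ w ∈ EE n ξ k, w + sA n k ≤ sb n k} ⊆
      ⋃ w ∈ Finset.range (sb n k), {ξ | w ∈ EE n ξ k} := by
    rintro ξ ⟨w, hw, hw'⟩
    simp only [Set.mem_iUnion]
    exact ⟨w, by simp; omega, hw⟩
  refine (measure_mono hsub).trans ((measure_biUnion_finset_le _ _).trans ?_)
  refine (Finset.sum_le_sum fun w _ => prob_EE n k w p μ hμ).trans ?_
  rw [Finset.sum_const, nsmul_eq_mul, Finset.card_range, ← ENNReal.ofReal_pow hp0,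
    ← ENNReal.ofReal_natCast, ← ENNReal.ofReal_natCast, ← ENNReal.ofReal_mul (by positivity),
    ← ENNReal.ofReal_mul (by positivity)]
  refine ENNReal.ofReal_le_ofReal ?_
  have hN : (sN n k : ℝ) * (12 * ((n : ℝ) + 3) ^ 2 * (sM n : ℝ) ^ k) =
      (12 * ((n : ℝ) + 3) ^ 2) ^ (2 ^ k) := by exact_mod_cast sN_eq n k
  have hb : (sb n k : ℝ) = 2 * ((n : ℝ) + 3) * (sM n : ℝ) ^ k := by
    unfold sb; push_cast; ring
  have hK : (0:ℝ) < (n : ℝ) + 3 := by positivity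
  have hK3 : (3:ℝ) ≤ (n : ℝ) + 3 := by have : (0:ℝ) ≤ n := by positivity
                                       linarith
  set K : ℝ := (n : ℝ) + 3
  have ht : 12 * K ^ 2 * p ≤ 1 / 2 := by
    rw [lt_div_iff₀ (by positivity)] at hp
    nlinarith
  have ht0 : 0 ≤ 12 * K ^ 2 * p := by positivity
  have e : 6 * K * ((sb n k : ℝ) * ((sN n k : ℝ) * p ^ (2 ^ k))) = (12 * K ^ 2 * p) ^ (2 ^ k) := by
    rw [mul_pow (12 * K ^ 2), ← hN, hb]; ring
  have h2 : (12 * K ^ 2 * p) ^ (2 ^ k) ≤ (1 / 2) ^ k :=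
    (pow_le_pow_left₀ ht0 ht _).trans
      (pow_le_pow_of_le_one (by norm_num) (by norm_num) Nat.lt_two_pow_self.le)
  have hpos : 0 ≤ (sb n k : ℝ) * ((sN n k : ℝ) * p ^ (2 ^ k)) := by positivity
  nlinarith

lemma main_aux (n : ℕ) (p : ℝ) (hp0 : 0 ≤ p) (hp : p < 1 / (576 * ((n : ℝ) + 3) ^ 2))
    (η : ℕ → Bool) (hη : Xinf η) (hf : fmap η = tzeta (n + 2))
    (μ : Measure (ℕ → Bool)) (hμ : IsBernoulliProduct μ p) :
    0 < μ {ξ | Compatible η ξ} := by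
  have hcov : (Set.univ : Set (ℕ → Bool)) ⊆ {ξ | Compatible η ξ} ∪
      ⋃ k, {ξ | ∃ w ∈ EE n ξ k, w + sA n k ≤ sb n k} := by
    intro ξ _
    by_cases h : ∃ k, ∃ w ∈ EE n ξ k, w + sA n k ≤ sb n k
    · right
      exact Set.mem_iUnion.2 h
    · left
      push Not at h
      exact compatible_of_safe n η ξ hη hf h
  have := hμ.1
  have hle : (1 : ℝ≥0∞) ≤ μ {ξ | Compatible η ξ} +
      ∑' k, μ {ξ | ∃ w ∈ EE n ξ k, w + sA n k ≤ sb n k} := by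
    calc (1 : ℝ≥0∞) = μ Set.univ := measure_univ.symm
      _ ≤ _ := measure_mono hcov
      _ ≤ _ := measure_union_le _ _
      _ ≤ _ := by gcongr; exact measure_iUnion_le _
  have hsum : ∑' k, μ {ξ | ∃ w ∈ EE n ξ k, w + sA n k ≤ sb n k} ≤ ENNReal.ofReal (1 / 2) := by
    refine (ENNReal.tsum_le_tsum fun k => prob_level n k p hp0 hp μ hμ).trans ?_
    rw [← ENNReal.ofReal_tsum_of_nonneg (fun k => by positivity)
      (summable_geometric_two.div_const 4), tsum_div_const, tsum_geometric_two]
    norm_num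
  by_contra hc
  have h0 : μ {ξ | Compatible η ξ} = 0 := by simpa using hc
  rw [h0, zero_add] at hle
  have := hle.trans hsum
  rw [ENNReal.one_le_ofReal] at this
  norm_num at this

theorem statement_18 (L : ℕ) (hL : 2 ≤ L) (p : ℝ) (hp0 : 0 ≤ p)
    (hp : p < 1 / (576 * ((L : ℝ) + 1) ^ 2)) (η : ℕ → Bool) (hη : Xinf η)
    (hf : fmap η = tzeta L)
    (μ : Measure (ℕ → Bool)) (hμ : IsBernoulliProduct μ p) :
    0 < μ {ξ | Compatible η ξ} := by
  obtain ⟨n, rfl⟩ : ∃ n, L = n + 2 := ⟨L - 2, by omega⟩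
  refine main_aux n p hp0 ?_ η hη hf μ hμ
  have e : (((n + 2 : ℕ) : ℝ) + 1) = (n : ℝ) + 3 := by push_cast; ring
  rwa [e] at hp

end Paper
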